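/- arXiv:math/0204014 — 2 statements merged into one kernel-verified Lean document; each statement's English description precedes it below -/
import Mathlib

section
/- Let u be a KdV admissible solution. Then for every t ∈ ℝ, ∫_ℝ [ (∂ₓ²u(t,x))² − (5/3)·u(t,x)·(∂ₓu(t,x))² + (5/36)·u(t,x)⁴ ] dx = ∫_ℝ [ (∂ₓ²u(0,x))² − (5/3)·u(0,x)·(∂ₓu(0,x))² + (5/36)·u(0,x)⁴ ] dx; that is, the next conserved integral of the KdV hierarchy after the Hamiltonian is constant in time. -/
/-!
Write `Dₖ = ∂ₓᵏ u`. Smoothness lets the equation be differentiated in `x`, which gives `∂ₜDₖ` for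
`k = 0, 1, 2` as a polynomial in `D₀, …, D₅` (`hasDerivAt_xDeriv_zero` and its successors). With
these formulas the time derivative of the density `D₂² − (5/3) D₀ D₁² + (5/36) D₀⁴` is an exact
`x`-derivative `∂ₓF`, where the flux is

`F = −2 D₂D₄ + D₃² + (10/3) D₀D₁D₃ − (8/3) D₀D₂² − (5/3) D₁²D₂ − (5/9) D₀³D₂
    + (5/2) D₀²D₁² − (1/9) D₀⁵`.

Every polynomial without constant term in the `Dₖ` is continuous and is `O(1/(1 + x²))` locally
uniformly in time (`LocUnifDecay`, a class closed under sums and products). This justifies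
differentiating under the integral sign, and shows `∫ ∂ₓF dx = 0`. Both are combined in
`integral_const_of_flux`.
-/

open MeasureTheory

noncomputable section

/-- A KdV admissible solution: a smooth real `u(t,x)` solving
`∂ₜu + ∂ₓ³u + u ∂ₓu = 0` on `ℝ × ℝ`, Schwartz in `x` locally uniformly in `t`. -/
structure KdVSolution where
  u : ℝ → ℝ → ℝ
  smooth : ContDiff ℝ (⊤ : ℕ∞) (Function.uncurry u)
  eqn : ∀ t x : ℝ, deriv (fun t' => u t' x) t + iteratedDeriv 3 (fun y => u t y) x
      + u t x * deriv (fun y => u t y) x = 0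
  decay : ∀ a b : ℝ, ∀ j k n : ℕ, ∃ B : ℝ, ∀ t ∈ Set.Icc a b, ∀ x : ℝ,
      |x| ^ n * |iteratedDeriv j (fun t' => iteratedDeriv k (fun y => u t' y) x) t| ≤ B

/-! ### Locally uniform decay and conservation laws -/

/-- Continuous functions of `(t, x)` that are `O(1/(1 + x²))` locally uniformly in `t`. -/
def LocUnifDecay (f : ℝ → ℝ → ℝ) : Prop :=
  Continuous (Function.uncurry f) ∧
    ∀ a b : ℝ, ∃ B : ℝ, ∀ t ∈ Set.Icc a b, ∀ x : ℝ, |f t x| ≤ B * (1 + x ^ 2)⁻¹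

namespace LocUnifDecay

variable {f g : ℝ → ℝ → ℝ}

theorem add (hf : LocUnifDecay f) (hg : LocUnifDecay g) :
    LocUnifDecay (fun t x => f t x + g t x) := by
  refine ⟨hf.1.add hg.1, fun a b => ?_⟩
  obtain ⟨B, hB⟩ := hf.2 a b
  obtain ⟨C, hC⟩ := hg.2 a b
  refine ⟨B + C, fun t ht x => (abs_add_le _ _).trans ?_⟩
  rw [add_mul]
  exact add_le_add (hB t ht x) (hC t ht x)

theorem mul (hf : LocUnifDecay f) (hg : LocUnifDecay g) :
    LocUnifDecay (fun t x => f t x * g t x) := by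
  refine ⟨hf.1.mul hg.1, fun a b => ?_⟩
  obtain ⟨B, hB⟩ := hf.2 a b
  obtain ⟨C, hC⟩ := hg.2 a b
  refine ⟨B * C, fun t ht x => ?_⟩
  have h0 : 0 < (1 + x ^ 2)⁻¹ := by positivity
  have h1 : (1 + x ^ 2)⁻¹ ≤ 1 := inv_le_one_of_one_le₀ (by nlinarith [sq_nonneg x])
  have hB' := hB t ht x
  have hC' := hC t ht x
  have hB0 : 0 ≤ B := nonneg_of_mul_nonneg_left ((abs_nonneg _).trans hB') h0
  have hC0 : 0 ≤ C := nonneg_of_mul_nonneg_left ((abs_nonneg _).trans hC') h0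
  rw [abs_mul, mul_assoc]
  calc |f t x| * |g t x| ≤ (B * (1 + x ^ 2)⁻¹) * (C * (1 + x ^ 2)⁻¹) := by gcongr
    _ ≤ (B * 1) * (C * (1 + x ^ 2)⁻¹) := by gcongr
    _ = B * (C * (1 + x ^ 2)⁻¹) := by ring

theorem const_mul (c : ℝ) (hf : LocUnifDecay f) : LocUnifDecay (fun t x => c * f t x) := by
  refine ⟨continuous_const.mul hf.1, fun a b => ?_⟩
  obtain ⟨B, hB⟩ := hf.2 a b
  refine ⟨|c| * B, fun t ht x => ?_⟩
  rw [abs_mul, mul_assoc]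
  exact mul_le_mul_of_nonneg_left (hB t ht x) (abs_nonneg c)

theorem sub (hf : LocUnifDecay f) (hg : LocUnifDecay g) :
    LocUnifDecay (fun t x => f t x - g t x) := by
  simpa [sub_eq_add_neg] using hf.add (hg.const_mul (-1))

theorem neg (hf : LocUnifDecay f) : LocUnifDecay (fun t x => -f t x) := by
  simpa using hf.const_mul (-1)

theorem pow_succ (hf : LocUnifDecay f) (n : ℕ) : LocUnifDecay (fun t x => f t x ^ (n + 1)) := by
  induction n with
  | zero => simpa using hf
  | succ n ih => simpa only [_root_.pow_succ _ (n + 1)] using ih.mul hf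

theorem continuous_slice (hf : LocUnifDecay f) (t : ℝ) : Continuous (f t) :=
  hf.1.comp (by fun_prop : Continuous fun x : ℝ => (t, x))

theorem integrable (hf : LocUnifDecay f) (t : ℝ) : Integrable (f t) := by
  obtain ⟨B, hB⟩ := hf.2 t t
  exact (integrable_inv_one_add_sq.const_mul B).mono' (hf.continuous_slice t).aestronglyMeasurable
    (.of_forall fun x => hB t ⟨le_rfl, le_rfl⟩ x)

end LocUnifDecay

/-- Integrated form of a conservation law `∂ₜE = G = ∂ₓF`: if `E`, `F`, `G` decay locally
uniformly in time, then `∫ E dx` does not depend on time. -/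
theorem integral_const_of_flux {E F G : ℝ → ℝ → ℝ} (hE : LocUnifDecay E) (hF : LocUnifDecay F)
    (hG : LocUnifDecay G) (hEt : ∀ t x, HasDerivAt (fun s => E s x) (G t x) t)
    (hFx : ∀ t x, HasDerivAt (F t) (G t x) x) (t s : ℝ) :
    ∫ x, E t x = ∫ x, E s x := by
  have key : ∀ r, HasDerivAt (fun r' => ∫ x, E r' x) 0 r := by
    intro r
    obtain ⟨B, hB⟩ := hG.2 (r - 1) (r + 1)
    have h := (hasDerivAt_integral_of_dominated_loc_of_deriv_le (μ := volume) (F := E) (F' := G)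
      (x₀ := r) (bound := fun x => B * (1 + x ^ 2)⁻¹)
      (Icc_mem_nhds (by linarith : r - 1 < r) (by linarith : r < r + 1))
      (.of_forall fun r' => (hE.continuous_slice r').aestronglyMeasurable)
      (hE.integrable r) (hG.continuous_slice r).aestronglyMeasurable
      (.of_forall fun x r' hr' => hB r' hr' x)
      (integrable_inv_one_add_sq.const_mul B)
      (.of_forall fun x r' _ => hEt r' x)).2
    rwa [integral_eq_zero_of_hasDerivAt_of_integrable (hFx r) (hG.integrable r)
      (hF.integrable r)] at h
  exact is_const_of_deriv_eq_zero (fun r => (key r).differentiableAt) (fun r => (key r).deriv) t s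

/-! ### Partial derivatives of smooth functions on the plane -/

theorem hasDerivAt_fst {f : ℝ × ℝ → ℝ} (hf : Differentiable ℝ f) (t x : ℝ) :
    HasDerivAt (fun s => f (s, x)) (fderiv ℝ f (t, x) (1, 0)) t :=
  (hf (t, x)).hasFDerivAt.comp_hasDerivAt t ((hasDerivAt_id t).prodMk (hasDerivAt_const t x))

theorem hasDerivAt_snd {f : ℝ × ℝ → ℝ} (hf : Differentiable ℝ f) (t x : ℝ) :
    HasDerivAt (fun y => f (t, y)) (fderiv ℝ f (t, x) (0, 1)) x :=
  (hf (t, x)).hasFDerivAt.comp_hasDerivAt x ((hasDerivAt_const x t).prodMk (hasDerivAt_id x))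

/-- Equality of mixed partials: if `G = ∂ₜf` and `H = ∂ₓf`, then `∂ₜH = ∂ₓG`. -/
theorem hasDerivAt_mixed {f : ℝ × ℝ → ℝ} (hf : ContDiff ℝ (⊤ : ℕ∞) f) {G H : ℝ → ℝ → ℝ}
    (hG : ∀ t x, HasDerivAt (fun s => f (s, x)) (G t x) t)
    (hH : ∀ t x, HasDerivAt (fun y => f (t, y)) (H t x) x) {K t x : ℝ}
    (hK : HasDerivAt (G t) K x) : HasDerivAt (fun s => H s x) K t := by
  have hd : Differentiable ℝ f := hf.differentiable (by simp)
  have hf' : ContDiff ℝ (⊤ : ℕ∞) (fderiv ℝ f) := hf.fderiv_right (by simp)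
  have hd' : Differentiable ℝ (fderiv ℝ f) := hf'.differentiable (by simp)
  have eG : G = fun t x => fderiv ℝ f (t, x) (1, 0) := by
    ext t x; exact (hG t x).unique (hasDerivAt_fst hd t x)
  have eH : H = fun t x => fderiv ℝ f (t, x) (0, 1) := by
    ext t x; exact (hH t x).unique (hasDerivAt_snd hd t x)
  have hsymm : IsSymmSndFDerivAt ℝ f (t, x) :=
    hf.contDiffAt.isSymmSndFDerivAt (by
      rw [minSmoothness_of_isRCLikeNormedField]
      exact WithTop.coe_le_coe.2 (le_top : (2 : ℕ∞) ≤ ⊤))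
  have h1 : HasDerivAt (fun s => fderiv ℝ f (s, x) (0, 1))
      (fderiv ℝ (fderiv ℝ f) (t, x) (1, 0) (0, 1)) t :=
    (ContinuousLinearMap.apply ℝ ℝ ((0, 1) : ℝ × ℝ)).hasFDerivAt.comp_hasDerivAt t
      ((hd' (t, x)).hasFDerivAt.comp_hasDerivAt t
        ((hasDerivAt_id t).prodMk (hasDerivAt_const t x)))
  have h2 : HasDerivAt (fun y => fderiv ℝ f (t, y) (1, 0))
      (fderiv ℝ (fderiv ℝ f) (t, x) (0, 1) (1, 0)) x :=
    (ContinuousLinearMap.apply ℝ ℝ ((1, 0) : ℝ × ℝ)).hasFDerivAt.comp_hasDerivAt x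
      ((hd' (t, x)).hasFDerivAt.comp_hasDerivAt x
        ((hasDerivAt_const x t).prodMk (hasDerivAt_id x)))
  rw [eG] at hK
  rw [eH, hK.unique h2, hsymm (0, 1) (1, 0)]
  exact h1

/-! ### Spatial derivatives of a solution and their evolution -/

namespace KdVSolution

/-- The spatial derivative `∂ₓᵏ u` as a function of `(t, x)`. -/
def xDeriv (U : KdVSolution) (k : ℕ) (t x : ℝ) : ℝ := iteratedDeriv k (fun y => U.u t y) x

variable (U : KdVSolution)

theorem contDiff_xDeriv (k : ℕ) : ContDiff ℝ (⊤ : ℕ∞) (Function.uncurry (U.xDeriv k)) := by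
  induction k with
  | zero =>
    have : U.xDeriv 0 = U.u := by ext t x; simp [xDeriv]
    rw [this]; exact U.smooth
  | succ k ih =>
    have e : Function.uncurry (U.xDeriv (k + 1)) =
        fun p => fderiv ℝ (Function.uncurry (U.xDeriv k)) p (0, 1) := by
      ext ⟨t, x⟩
      have h := hasDerivAt_snd (ih.differentiable (by simp)) t x
      rw [← h.deriv]
      simp only [Function.uncurry, xDeriv, iteratedDeriv_succ]
    rw [e]
    exact (ih.fderiv_right (by simp)).clm_apply contDiff_const

theorem hasDerivAt_xDeriv (k : ℕ) (t x : ℝ) :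
    HasDerivAt (U.xDeriv k t) (U.xDeriv (k + 1) t x) x := by
  have h := hasDerivAt_snd ((U.contDiff_xDeriv k).differentiable (by simp)) t x
  have e : U.xDeriv (k + 1) t x = deriv (U.xDeriv k t) x := by
    simp only [xDeriv, iteratedDeriv_succ]; rfl
  rw [e]
  exact h.differentiableAt.hasDerivAt

theorem locUnifDecay_xDeriv (k : ℕ) : LocUnifDecay (U.xDeriv k) := by
  refine ⟨(U.contDiff_xDeriv k).continuous, fun a b => ?_⟩
  obtain ⟨B, hB⟩ := U.decay a b 0 k 0
  obtain ⟨C, hC⟩ := U.decay a b 0 k 2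
  refine ⟨B + C, fun t ht x => ?_⟩
  have hB' := hB t ht x
  have hC' := hC t ht x
  simp only [iteratedDeriv_zero, pow_zero, one_mul, sq_abs] at hB' hC'
  rw [← div_eq_mul_inv, le_div_iff₀ (by positivity)]
  change |iteratedDeriv k (fun y => U.u t y) x| * _ ≤ _
  linarith

theorem hasDerivAt_xDeriv_zero (t x : ℝ) : HasDerivAt (fun s => U.xDeriv 0 s x)
    (-(U.xDeriv 3 t x + U.xDeriv 0 t x * U.xDeriv 1 t x)) t := by
  have h := (hasDerivAt_fst ((U.contDiff_xDeriv 0).differentiable (by simp)) t x)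
    |>.differentiableAt.hasDerivAt
  have e := U.eqn t x
  refine h.congr_deriv ?_
  simp only [xDeriv, Function.uncurry, iteratedDeriv_zero, iteratedDeriv_one]
  linarith

theorem hasDerivAt_xDeriv_one (t x : ℝ) : HasDerivAt (fun s => U.xDeriv 1 s x)
    (-(U.xDeriv 4 t x + U.xDeriv 1 t x ^ 2 + U.xDeriv 0 t x * U.xDeriv 2 t x)) t := by
  refine hasDerivAt_mixed (U.contDiff_xDeriv 0) U.hasDerivAt_xDeriv_zero (U.hasDerivAt_xDeriv 0) ?_
  have h := fun k => U.hasDerivAt_xDeriv k t x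
  refine ((h 3).add ((h 0).mul (h 1))).neg.congr_deriv ?_
  ring

theorem hasDerivAt_xDeriv_two (t x : ℝ) : HasDerivAt (fun s => U.xDeriv 2 s x)
    (-(U.xDeriv 5 t x + 3 * U.xDeriv 1 t x * U.xDeriv 2 t x
      + U.xDeriv 0 t x * U.xDeriv 3 t x)) t := by
  refine hasDerivAt_mixed (U.contDiff_xDeriv 1) U.hasDerivAt_xDeriv_one (U.hasDerivAt_xDeriv 1) ?_
  have h := fun k => U.hasDerivAt_xDeriv k t x
  refine (((h 4).add ((h 1).pow 2)).add ((h 0).mul (h 2))).neg.congr_deriv ?_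
  norm_num
  ring

/-! ### Density and flux -/

/-- The conserved density `D₂² − (5/3) D₀ D₁² + (5/36) D₀⁴`. -/
def density (t x : ℝ) : ℝ :=
  U.xDeriv 2 t x ^ 2 - 5 / 3 * (U.xDeriv 0 t x * U.xDeriv 1 t x ^ 2)
    + 5 / 36 * U.xDeriv 0 t x ^ 4

/-- The flux `F`, a polynomial in `D₀, …, D₄` with `∂ₜ density = ∂ₓF`. -/
def flux (t x : ℝ) : ℝ :=
  -2 * (U.xDeriv 2 t x * U.xDeriv 4 t x) + U.xDeriv 3 t x ^ 2
    + 10 / 3 * (U.xDeriv 0 t x * U.xDeriv 1 t x * U.xDeriv 3 t x)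
    - 8 / 3 * (U.xDeriv 0 t x * U.xDeriv 2 t x ^ 2)
    - 5 / 3 * (U.xDeriv 1 t x ^ 2 * U.xDeriv 2 t x)
    - 5 / 9 * (U.xDeriv 0 t x ^ 3 * U.xDeriv 2 t x)
    + 5 / 2 * (U.xDeriv 0 t x ^ 2 * U.xDeriv 1 t x ^ 2)
    - 1 / 9 * U.xDeriv 0 t x ^ 5

/-- The time derivative of `density`, with `∂ₜDₖ` eliminated by means of the equation. -/
def densityRate (t x : ℝ) : ℝ :=
  -2 * (U.xDeriv 2 t x * (U.xDeriv 5 t x + 3 * (U.xDeriv 1 t x * U.xDeriv 2 t x)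
      + U.xDeriv 0 t x * U.xDeriv 3 t x))
    + 5 / 3 * ((U.xDeriv 3 t x + U.xDeriv 0 t x * U.xDeriv 1 t x) * U.xDeriv 1 t x ^ 2)
    + 10 / 3 * (U.xDeriv 0 t x * U.xDeriv 1 t x
      * (U.xDeriv 4 t x + U.xDeriv 1 t x ^ 2 + U.xDeriv 0 t x * U.xDeriv 2 t x))
    - 5 / 9 * (U.xDeriv 0 t x ^ 3 * (U.xDeriv 3 t x + U.xDeriv 0 t x * U.xDeriv 1 t x))

theorem hasDerivAt_density (t x : ℝ) :
    HasDerivAt (fun s => U.density s x) (U.densityRate t x) t := by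
  have h0 := U.hasDerivAt_xDeriv_zero t x
  have h1 := U.hasDerivAt_xDeriv_one t x
  have h2 := U.hasDerivAt_xDeriv_two t x
  refine (((h2.pow 2).sub ((h0.mul (h1.pow 2)).const_mul (5 / 3))).add
    ((h0.pow 4).const_mul (5 / 36))).congr_deriv ?_
  simp only [densityRate, Pi.pow_apply]
  norm_num
  ring

theorem hasDerivAt_flux (t x : ℝ) : HasDerivAt (U.flux t) (U.densityRate t x) x := by
  have h := fun k => U.hasDerivAt_xDeriv k t x
  refine ((((((((((h 2).mul (h 4)).const_mul (-2)).add ((h 3).pow 2)).add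
    ((((h 0).mul (h 1)).mul (h 3)).const_mul (10 / 3))).sub
    (((h 0).mul ((h 2).pow 2)).const_mul (8 / 3))).sub
    ((((h 1).pow 2).mul (h 2)).const_mul (5 / 3))).sub
    ((((h 0).pow 3).mul (h 2)).const_mul (5 / 9))).add
    ((((h 0).pow 2).mul ((h 1).pow 2)).const_mul (5 / 2))).sub
    (((h 0).pow 5).const_mul (1 / 9))).congr_deriv ?_
  simp only [densityRate, Pi.pow_apply, Pi.mul_apply]
  norm_num
  ring

theorem locUnifDecay_density : LocUnifDecay U.density := by
  have h := U.locUnifDecay_xDeriv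
  exact (((h 2).pow_succ 1).sub (((h 0).mul ((h 1).pow_succ 1)).const_mul _)).add
    (((h 0).pow_succ 3).const_mul _)

theorem locUnifDecay_flux : LocUnifDecay U.flux := by
  have h := U.locUnifDecay_xDeriv
  exact ((((((((((h 2).mul (h 4)).const_mul _).add ((h 3).pow_succ 1)).add
    ((((h 0).mul (h 1)).mul (h 3)).const_mul _)).sub
    (((h 0).mul ((h 2).pow_succ 1)).const_mul _)).sub
    ((((h 1).pow_succ 1).mul (h 2)).const_mul _)).sub
    ((((h 0).pow_succ 2).mul (h 2)).const_mul _)).add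
    ((((h 0).pow_succ 1).mul ((h 1).pow_succ 1)).const_mul _)).sub
    (((h 0).pow_succ 4).const_mul _))

theorem locUnifDecay_densityRate : LocUnifDecay U.densityRate := by
  have h := U.locUnifDecay_xDeriv
  exact (((((h 2).mul (((h 5).add (((h 1).mul (h 2)).const_mul 3)).add
      ((h 0).mul (h 3)))).const_mul _).add
    ((((h 3).add ((h 0).mul (h 1))).mul ((h 1).pow_succ 1)).const_mul _)).add
    ((((h 0).mul (h 1)).mul (((h 4).add ((h 1).pow_succ 1)).add
      ((h 0).mul (h 2)))).const_mul _)).sub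
    ((((h 0).pow_succ 2).mul ((h 3).add ((h 0).mul (h 1)))).const_mul _)

end KdVSolution

/-- Conservation of the next integral of the KdV hierarchy after the Hamiltonian:
`∫ (∂ₓ²u)² − (5/3) u (∂ₓu)² + (5/36) u⁴ dx` is constant in time. -/
theorem kdv_third_conservation_law (U : KdVSolution) (t : ℝ) :
    ∫ x : ℝ, ((iteratedDeriv 2 (fun y => U.u t y) x) ^ 2
        - (5/3) * U.u t x * (deriv (fun y => U.u t y) x) ^ 2
        + (5/36) * (U.u t x) ^ 4) =
      ∫ x : ℝ, ((iteratedDeriv 2 (fun y => U.u 0 y) x) ^ 2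
        - (5/3) * U.u 0 x * (deriv (fun y => U.u 0 y) x) ^ 2
        + (5/36) * (U.u 0 x) ^ 4) := by
  have h := integral_const_of_flux U.locUnifDecay_density U.locUnifDecay_flux
    U.locUnifDecay_densityRate U.hasDerivAt_density U.hasDerivAt_flux t 0
  simpa only [KdVSolution.density, KdVSolution.xDeriv, iteratedDeriv_zero, iteratedDeriv_one,
    ← mul_assoc] using h
end
end

section
/- Let m : ℝ → ℝ be an even function and let ξ₁, ξ₂, ξ₃, ξ₄ ∈ ℝ satisfy ξ₁ + ξ₂ + ξ₃ + ξ₄ = 0 and ξᵢ ≠ 0 for i = 1,2,3,4. Then −(1/2)·(1/24)·Σ_{σ ∈ S₄} [ 2·m(ξ_{σ(1)})²·ξ_{σ(1)} + m(ξ_{σ(3)}+ξ_{σ(4)})²·(ξ_{σ(3)}+ξ_{σ(4)}) ] / (3·ξ_{σ(1)}·ξ_{σ(2)}) = −(1/36)·(1/(ξ₁ξ₂ξ₃ξ₄))·{ ξ₁ξ₂ξ₃·[m(ξ₁)² + m(ξ₂)² + m(ξ₃)² − m(ξ₁+ξ₂)² − m(ξ₁+ξ₃)² − m(ξ₁+ξ₄)²]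 + ξ₁ξ₂ξ₄·[m(ξ₁)² + m(ξ₂)² + m(ξ₄)² − m(ξ₁+ξ₂)² − m(ξ₁+ξ₃)² − m(ξ₁+ξ₄)²] + ξ₁ξ₃ξ₄·[m(ξ₁)² + m(ξ₃)² + m(ξ₄)² − m(ξ₁+ξ₂)² − m(ξ₁+ξ₃)² − m(ξ₁+ξ₄)²] + ξ₂ξ₃ξ₄·[m(ξ₂)² + m(ξ₃)² + m(ξ₄)² − m(ξ₁+ξ₂)² − m(ξ₁+ξ₃)² − m(ξ₁+ξ₄)²] }. -/
/-!
On the hyperplane `ξ₁ + ξ₂ + ξ₃ + ξ₄ = 0` with `m` even, `ξ_c + ξ_d = -(ξ_a + ξ_b)` for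
complementary pairs, so each term of the symmetrization equals
`(2/3) m(ξ_a)² / ξ_b - (1/3) m(ξ_a + ξ_b)² (1/ξ_a + 1/ξ_b)`. Summed over `S₄`, the first part has
coefficient `∑_{b ≠ a} 1/ξ_b` at `m(ξ_a)²`; in the second part complementary pairs share the same
value of `m²`, which therefore gets the coefficient `∑_b 1/ξ_b`. These are the coefficients of the
closed form. `sum_perm_fin_four` writes the sum over `S₄` out, and `M4_term` rewrites each term.
-/

/-- The sum over `S₄` of a function of the first two values `(σ 0, σ 1)`: each ordered pair of
distinct indices is attained by exactly two permutations. -/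
lemma sum_perm_fin_four (f : Fin 4 → Fin 4 → ℝ) :
    ∑ σ : Equiv.Perm (Fin 4), f (σ 0) (σ 1) =
      2 * (f 0 1 + f 0 2 + f 0 3 + f 1 0 + f 1 2 + f 1 3
        + f 2 0 + f 2 1 + f 2 3 + f 3 0 + f 3 1 + f 3 2) := by
  -- Group the permutations by the pair `(σ 0, σ 1)`; the fibre sizes are decidable.
  have hcard : ∀ p : Fin 4 × Fin 4,
      (Finset.univ.filter fun σ : Equiv.Perm (Fin 4) => (σ 0, σ 1) = p).card =
        if p.1 = p.2 then 0 else 2 := by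
    decide
  rw [← Finset.sum_fiberwise (s := Finset.univ)
    (g := fun σ : Equiv.Perm (Fin 4) => (σ 0, σ 1))]
  have hfib : ∀ p : Fin 4 × Fin 4,
      ∑ σ : Equiv.Perm (Fin 4) with (σ 0, σ 1) = p, f (σ 0) (σ 1) =
        (if p.1 = p.2 then 0 else 2) * f p.1 p.2 := by
    intro p
    have hconst : ∀ σ ∈ Finset.univ.filter (fun σ : Equiv.Perm (Fin 4) => (σ 0, σ 1) = p),
        f (σ 0) (σ 1) = f p.1 p.2 := by
      intro σ hσ
      rw [← (Finset.mem_filter.mp hσ).2]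
    rw [Finset.sum_congr rfl hconst, Finset.sum_const, hcard, nsmul_eq_mul]
    split_ifs <;> simp
  rw [Finset.sum_congr rfl fun p _ => hfib p, Fintype.sum_prod_type]
  simp [Fin.sum_univ_four]
  ring

/-- A term of the symmetrization, with `m (c + d)` eliminated through `c + d = -(a + b)`. -/
lemma M4_term (m : ℝ → ℝ) (hm : ∀ x : ℝ, m (-x) = m x) {a b c d : ℝ}
    (hsum : a + b + c + d = 0) (ha : a ≠ 0) (hb : b ≠ 0) :
    (2 * m a ^ 2 * a + m (c + d) ^ 2 * (c + d)) / (3 * a * b) =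
      2 / 3 * m a ^ 2 * b⁻¹ - 1 / 3 * m (a + b) ^ 2 * (a⁻¹ + b⁻¹) := by
  have hcd : c + d = -(a + b) := by linarith
  rw [hcd, hm]
  field_simp
  ring

/-- Explicit closed form of the symmetrized 4-multiplier
`M₄ = −(1/2)[(2 m(ξ₁)² ξ₁ + m(ξ₃+ξ₄)² (ξ₃+ξ₄))/(3 ξ₁ ξ₂)]_sym` arising in the
modified-energy construction for KdV, on the hyperplane `ξ₁+ξ₂+ξ₃+ξ₄ = 0` away
from the coordinate hyperplanes, for any even `m : ℝ → ℝ`. -/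
theorem M4_explicit_formula (m : ℝ → ℝ) (hm : ∀ x : ℝ, m (-x) = m x)
    (ξ₁ ξ₂ ξ₃ ξ₄ : ℝ) (hsum : ξ₁ + ξ₂ + ξ₃ + ξ₄ = 0)
    (h₁ : ξ₁ ≠ 0) (h₂ : ξ₂ ≠ 0) (h₃ : ξ₃ ≠ 0) (h₄ : ξ₄ ≠ 0) :
    -(1/2 : ℝ) * (1/24) * ∑ σ : Equiv.Perm (Fin 4),
        (2 * m (![ξ₁, ξ₂, ξ₃, ξ₄] (σ 0)) ^ 2 * ![ξ₁, ξ₂, ξ₃, ξ₄] (σ 0)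
            + m (![ξ₁, ξ₂, ξ₃, ξ₄] (σ 2) + ![ξ₁, ξ₂, ξ₃, ξ₄] (σ 3)) ^ 2 *
                (![ξ₁, ξ₂, ξ₃, ξ₄] (σ 2) + ![ξ₁, ξ₂, ξ₃, ξ₄] (σ 3))) /
          (3 * ![ξ₁, ξ₂, ξ₃, ξ₄] (σ 0) * ![ξ₁, ξ₂, ξ₃, ξ₄] (σ 1)) =
      -(1/36 : ℝ) * (1 / (ξ₁ * ξ₂ * ξ₃ * ξ₄)) *
        (ξ₁ * ξ₂ * ξ₃ * (m ξ₁ ^ 2 + m ξ₂ ^ 2 + m ξ₃ ^ 2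
            - m (ξ₁ + ξ₂) ^ 2 - m (ξ₁ + ξ₃) ^ 2 - m (ξ₁ + ξ₄) ^ 2)
          + ξ₁ * ξ₂ * ξ₄ * (m ξ₁ ^ 2 + m ξ₂ ^ 2 + m ξ₄ ^ 2
            - m (ξ₁ + ξ₂) ^ 2 - m (ξ₁ + ξ₃) ^ 2 - m (ξ₁ + ξ₄) ^ 2)
          + ξ₁ * ξ₃ * ξ₄ * (m ξ₁ ^ 2 + m ξ₃ ^ 2 + m ξ₄ ^ 2
            - m (ξ₁ + ξ₂) ^ 2 - m (ξ₁ + ξ₃) ^ 2 - m (ξ₁ + ξ₄) ^ 2)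
          + ξ₂ * ξ₃ * ξ₄ * (m ξ₂ ^ 2 + m ξ₃ ^ 2 + m ξ₄ ^ 2
            - m (ξ₁ + ξ₂) ^ 2 - m (ξ₁ + ξ₃) ^ 2 - m (ξ₁ + ξ₄) ^ 2)) := by
  set ξ : Fin 4 → ℝ := ![ξ₁, ξ₂, ξ₃, ξ₄] with hξ
  have hne : ∀ i, ξ i ≠ 0 := by
    intro i
    fin_cases i <;> simpa [hξ]
  have hperm : ∀ σ : Equiv.Perm (Fin 4), ξ (σ 0) + ξ (σ 1) + ξ (σ 2) + ξ (σ 3) = 0 := by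
    intro σ
    rw [← Fin.sum_univ_four (fun i => ξ (σ i)), Equiv.sum_comp σ ξ, Fin.sum_univ_four]
    simpa [hξ] using hsum
  rw [Finset.sum_congr rfl fun σ _ => M4_term m hm (hperm σ) (hne (σ 0)) (hne (σ 1)),
    sum_perm_fin_four fun i j =>
      2 / 3 * m (ξ i) ^ 2 * (ξ j)⁻¹ - 1 / 3 * m (ξ i + ξ j) ^ 2 * ((ξ i)⁻¹ + (ξ j)⁻¹)]
  have e0 : ξ 0 = ξ₁ := rfl
  have e1 : ξ 1 = ξ₂ := rfl
  have e2 : ξ 2 = ξ₃ := rfl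
  have e3 : ξ 3 = ξ₄ := rfl
  -- Complementary pairs have opposite sums, hence the same value of `m`.
  have m34 : m (ξ₃ + ξ₄) = m (ξ₁ + ξ₂) := by
    rw [← hm]; congr 1; linarith
  have m24 : m (ξ₂ + ξ₄) = m (ξ₁ + ξ₃) := by
    rw [← hm]; congr 1; linarith
  have m23 : m (ξ₂ + ξ₃) = m (ξ₁ + ξ₄) := by
    rw [← hm]; congr 1; linarith
  simp only [e0, e1, e2, e3, add_comm ξ₂ ξ₁, add_comm ξ₃ ξ₁, add_comm ξ₄ ξ₁, add_comm ξ₃ ξ₂,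
    add_comm ξ₄ ξ₂, add_comm ξ₄ ξ₃, m34, m24, m23]
  field_simp
  ring
end
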